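/- arXiv:2112.03684 — 2 statements merged into one kernel-verified Lean document; each statement's English description precedes it below -/
import Mathlib

section
/- Let Γ be any one of the type two groups Γ₂(p,k) for (p,k) in {(6,4), (6,6), (3,7), (3,8), (3,9), (3,10), (3,12), (4,5), (4,6), (4,8), (5,4), (5,5)}, the type three groups Γ₃(p,k) for (p,k) in {(7,2), (8,2), (9,2), (10,2), (12,2), (18,2)}, or the type four groups Γ₄(p,k) for (p,k) in {(7,3), (8,3), (8,4), (9,3), (10,3), (10,5), (12,3), (12,6), (18,3)}. Then the set of type-preserving homomorphisms Γ → PGL(3,ℂ), modulo the conjugation action of PGL(3,ℂ), is finite. -/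
noncomputable section

abbrev GL3 := GL (Fin 3) ℂ

/-- The subgroup of nonzero scalar matrices in `GL(3,ℂ)`. -/
def scalarSubgroup : Subgroup GL3 := (Units.map (Matrix.scalar (Fin 3)).toMonoidHom).range

instance : scalarSubgroup.Normal := by
  constructor
  intro x hx g
  obtain ⟨c, rfl⟩ := hx
  refine ⟨c, ?_⟩
  apply Units.ext
  have hcomm : Commute ((Matrix.scalar (Fin 3)) c.val) (g : Matrix (Fin 3) (Fin 3) ℂ) :=
    Matrix.scalar_commute _ (fun _ => Commute.all _ _) _
  simp only [Units.val_mul]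
  calc (Units.map (Matrix.scalar (Fin 3)).toMonoidHom c : Matrix (Fin 3) (Fin 3) ℂ)
      = (Matrix.scalar (Fin 3)) c.val := rfl
    _ = (g : Matrix (Fin 3) (Fin 3) ℂ) * ((Matrix.scalar (Fin 3)) c.val) * (g⁻¹ : GL3) := by
        rw [← hcomm.eq, mul_assoc, ← Units.val_mul, mul_inv_cancel, Units.val_one, mul_one]

/-- `PGL(3,ℂ)`: the quotient of `GL(3,ℂ)` by the subgroup of nonzero scalar matrices,
equipped with the quotient topology. -/
abbrev PGL3 := GL3 ⧸ scalarSubgroup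

/-- An element of `PGL(3,ℂ)` is a complex reflection if it has a lift in `GL(3,ℂ)` that is
diagonalizable, non-scalar, and has an eigenvalue whose eigenspace is 2-dimensional. -/
def IsComplexReflection (x : PGL3) : Prop :=
  ∃ M : GL3, (QuotientGroup.mk M : PGL3) = x ∧
    (∃ (B : GL3) (d : Fin 3 → ℂ),
      (B : Matrix (Fin 3) (Fin 3) ℂ) * M * (B⁻¹ : GL3) = Matrix.diagonal d) ∧
    (∀ c : ℂ, (M : Matrix (Fin 3) (Fin 3) ℂ) ≠ c • (1 : Matrix (Fin 3) (Fin 3) ℂ)) ∧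
    (∃ μ : ℂ, Module.finrank ℂ
      (Module.End.eigenspace (Matrix.mulVecLin (M : Matrix (Fin 3) (Fin 3) ℂ)) μ) = 2)

/-- An element of `PGL(3,ℂ)` is regular elliptic if it has a lift in `GL(3,ℂ)` of finite order
with three pairwise distinct eigenvalues. -/
def IsRegularElliptic (x : PGL3) : Prop :=
  ∃ M : GL3, (QuotientGroup.mk M : PGL3) = x ∧
    (∃ n : ℕ, 0 < n ∧ M ^ n = 1) ∧
    (∃ a b c : ℂ, a ≠ b ∧ a ≠ c ∧ b ≠ c ∧
      Module.End.HasEigenvalue (Matrix.mulVecLin (M : Matrix (Fin 3) (Fin 3) ℂ)) a ∧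
      Module.End.HasEigenvalue (Matrix.mulVecLin (M : Matrix (Fin 3) (Fin 3) ℂ)) b ∧
      Module.End.HasEigenvalue (Matrix.mulVecLin (M : Matrix (Fin 3) (Fin 3) ℂ)) c)

/-- A representation preserves generator types if the image of the generator `R₁` is a complex
reflection or the identity, and the image of the generator `J` is regular elliptic. -/
def TypePreserving {Γ : Type*} [Group Γ] (ρ : Γ →* PGL3) (J R : Γ) : Prop :=
  (IsComplexReflection (ρ R) ∨ ρ R = 1) ∧ IsRegularElliptic (ρ J)

/-- Two representations are conjugate by an element of `PGL(3,ℂ)`. -/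
def ConjRel {Γ : Type*} [Group Γ] (ρ ρ' : Γ →* PGL3) : Prop :=
  ∃ g : PGL3, ∀ γ : Γ, ρ' γ = g * ρ γ * g⁻¹

/-- Generators of the two-generator presentations of the 3-fold Deligne-Mostow lattices. -/
inductive Gen2 | J | R

/-- Relators of the two-generator presentation of type two Deligne-Mostow lattices:
`J³ = R₁ᵖ = (R₁J)²ᵏ = (R₁J²)²ˡ = 1` and
`R₁ J R₁ J² R₁ J R₁^(p-1) J² R₁^(p-1) J R₁^(p-1) J² = 1`. -/
def relsTwo (p k l : ℕ) : Set (FreeGroup Gen2) :=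
  { (FreeGroup.of Gen2.J) ^ 3, (FreeGroup.of Gen2.R) ^ p,
    (FreeGroup.of Gen2.R * FreeGroup.of Gen2.J) ^ (2 * k),
    (FreeGroup.of Gen2.R * (FreeGroup.of Gen2.J) ^ 2) ^ (2 * l),
    FreeGroup.of Gen2.R * FreeGroup.of Gen2.J * FreeGroup.of Gen2.R *
      (FreeGroup.of Gen2.J) ^ 2 * FreeGroup.of Gen2.R * FreeGroup.of Gen2.J *
      (FreeGroup.of Gen2.R) ^ (p - 1) * (FreeGroup.of Gen2.J) ^ 2 *
      (FreeGroup.of Gen2.R) ^ (p - 1) * FreeGroup.of Gen2.J *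
      (FreeGroup.of Gen2.R) ^ (p - 1) * (FreeGroup.of Gen2.J) ^ 2 }

/-- The type two Deligne-Mostow group `Γ₂(p,k)`, with `l` the positive integer satisfying
`1/l = 1/2 - 1/p - 1/k`. -/
abbrev GammaTwo (p k l : ℕ) := PresentedGroup (relsTwo p k l)

/-- Relators of the two-generator presentation of type three Deligne-Mostow lattices:
`J³ = R₁ᵖ = (R₁J)²ᵏ = (R₁JR₁J²)³ᵈ = 1` and
`R₁ J R₁ J² R₁ J R₁^(p-1) J² R₁^(p-1) J R₁^(p-1) J² = 1`. -/
def relsThree (p k d : ℕ) : Set (FreeGroup Gen2) :=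
  { (FreeGroup.of Gen2.J) ^ 3, (FreeGroup.of Gen2.R) ^ p,
    (FreeGroup.of Gen2.R * FreeGroup.of Gen2.J) ^ (2 * k),
    (FreeGroup.of Gen2.R * FreeGroup.of Gen2.J * FreeGroup.of Gen2.R *
      (FreeGroup.of Gen2.J) ^ 2) ^ (3 * d),
    FreeGroup.of Gen2.R * FreeGroup.of Gen2.J * FreeGroup.of Gen2.R *
      (FreeGroup.of Gen2.J) ^ 2 * FreeGroup.of Gen2.R * FreeGroup.of Gen2.J *
      (FreeGroup.of Gen2.R) ^ (p - 1) * (FreeGroup.of Gen2.J) ^ 2 *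
      (FreeGroup.of Gen2.R) ^ (p - 1) * FreeGroup.of Gen2.J *
      (FreeGroup.of Gen2.R) ^ (p - 1) * (FreeGroup.of Gen2.J) ^ 2 }

/-- The type three Deligne-Mostow group `Γ₃(p,k)`, with `d` the positive integer satisfying
`1/d = 1/2 - 3/p`. -/
abbrev GammaThree (p k d : ℕ) := PresentedGroup (relsThree p k d)

/-- Relators of the two-generator presentation of type four Deligne-Mostow lattices:
`J³ = R₁ᵖ = (R₁J)²ᵏ = (R₁J²)²ˡ = (R₁JR₁J²)³ᵈ = 1` and
`R₁ J R₁ J² R₁ J R₁^(p-1) J² R₁^(p-1) J R₁^(p-1) J² = 1`. -/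
def relsFour (p k l d : ℕ) : Set (FreeGroup Gen2) :=
  { (FreeGroup.of Gen2.J) ^ 3, (FreeGroup.of Gen2.R) ^ p,
    (FreeGroup.of Gen2.R * FreeGroup.of Gen2.J) ^ (2 * k),
    (FreeGroup.of Gen2.R * (FreeGroup.of Gen2.J) ^ 2) ^ (2 * l),
    (FreeGroup.of Gen2.R * FreeGroup.of Gen2.J * FreeGroup.of Gen2.R *
      (FreeGroup.of Gen2.J) ^ 2) ^ (3 * d),
    FreeGroup.of Gen2.R * FreeGroup.of Gen2.J * FreeGroup.of Gen2.R *
      (FreeGroup.of Gen2.J) ^ 2 * FreeGroup.of Gen2.R * FreeGroup.of Gen2.J *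
      (FreeGroup.of Gen2.R) ^ (p - 1) * (FreeGroup.of Gen2.J) ^ 2 *
      (FreeGroup.of Gen2.R) ^ (p - 1) * FreeGroup.of Gen2.J *
      (FreeGroup.of Gen2.R) ^ (p - 1) * (FreeGroup.of Gen2.J) ^ 2 }

/-- The type four Deligne-Mostow group `Γ₄(p,k)`, with `l`, `d` the positive integers satisfying
`1/l = 1/2 - 1/p - 1/k` and `1/d = 1/2 - 3/p`. -/
abbrev GammaFour (p k l d : ℕ) := PresentedGroup (relsFour p k l d)

/-!
Up to a scalar, a complex reflection of finite order is `A = 1 + v φᵀ` of finite order in `GL(3)`,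
and a regular elliptic element of finite order is conjugate to `D = diag(d)` with `d` injective.
Evaluating the characteristic polynomial of `A D` at `d i` gives, up to sign,
`v i * φ i * d i * ∏ j ≠ i, (d i - d j)`, so `d` and this polynomial determine each product
`v i * φ i`. If `A D` has finite order in `PGL(3)`, taking determinants bounds its
order in `GL(3)`, so its characteristic polynomial is one of finitely many; the entries of `d` are
roots of unity of bounded order. Conjugating by the diagonal torus turns `v i` into `0` or `1`, and
`φ i` into `0` or `1` where `v i = 0`, after which only finitely many pairs `(A, D)` remain.
-/

section DiagonalPlusRankOne

open Finset Matrix Polynomial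

variable {ι R K : Type*} [Fintype ι] [DecidableEq ι] [CommRing R] [Field K]

lemma det_diagonal_add_vecMulVec_of_eq_zero {e : ι → R} {i : ι} (hi : e i = 0) (u w : ι → R) :
    (diagonal e + vecMulVec u w).det = u i * w i * ∏ j ∈ univ.erase i, e j := by
  have row_i : diagonal e + vecMulVec u w =
      (diagonal e + vecMulVec u w).updateRow i (u i • w) := by
    ext j l
    by_cases hj : j = i
    · subst hj
      by_cases hl : j = l
      · subst hl; simp [vecMulVec_apply, hi]
      · simp [vecMulVec_apply, diagonal_apply_ne _ hl]
    · simp [updateRow_ne hj]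
  have clear_rows : ((diagonal e + vecMulVec u w).updateRow i w).det =
      ((diagonal e).updateRow i w).det := by
    refine det_eq_of_forall_row_eq_smul_add_const (Function.update u i 0) i (by simp) fun j l => ?_
    by_cases hj : j = i
    · subst hj; simp
    · simp [updateRow_ne hj, Function.update_of_ne hj, vecMulVec_apply]
  have expand : ((diagonal e).updateRow i w).det = w i * ∏ j ∈ univ.erase i, e j := by
    rw [← cramer_transpose_apply, cramer_eq_adjugate_mulVec, diagonal_transpose,
      adjugate_diagonal, mulVec_diagonal, mul_comm]
  rw [row_i, det_updateRow_smul, clear_rows, expand, mul_assoc]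

lemma eval_charpoly_one_add_vecMulVec_mul_diagonal (d v φ : ι → R) (i : ι) :
    ((1 + vecMulVec v φ) * diagonal d).charpoly.eval (d i) =
      -(v i * φ i * d i * ∏ j ∈ univ.erase i, (d i - d j)) := by
  have charmatrix_eq : scalar ι (d i) - (1 + vecMulVec v φ) * diagonal d =
      diagonal (fun j => d i - d j) + vecMulVec (-v) (φ * d) := by
    ext j l
    simp only [scalar_apply, Matrix.sub_apply, mul_diagonal, Matrix.add_apply, vecMulVec_apply,
      neg_vecMulVec, Matrix.neg_apply, Pi.mul_apply]
    by_cases hjl : j = l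
    · subst hjl
      simp only [diagonal_apply_eq, one_apply_eq]
      ring
    · simp only [diagonal_apply_ne _ hjl, one_apply_ne hjl]
      ring
  rw [eval_charpoly, charmatrix_eq, det_diagonal_add_vecMulVec_of_eq_zero (i := i) (by simp)]
  simp only [Pi.neg_apply, Pi.mul_apply]
  ring

lemma mul_apply_eq_eval_charpoly_div {d : ι → K} (hd : Function.Injective d) {i : ι}
    (hdi : d i ≠ 0) (v φ : ι → K) :
    v i * φ i = -((1 + vecMulVec v φ) * diagonal d).charpoly.eval (d i) /
      (d i * ∏ j ∈ univ.erase i, (d i - d j)) := by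
  have hprod : ∏ j ∈ univ.erase i, (d i - d j) ≠ 0 :=
    prod_ne_zero_iff.2 fun j hj => sub_ne_zero.2 (hd.ne (ne_of_mem_erase hj).symm)
  rw [eval_charpoly_one_add_vecMulVec_mul_diagonal, eq_div_iff (mul_ne_zero hdi hprod)]
  ring

lemma exists_eq_vecMulVec_of_rank_le_one {m n : Type*} [Fintype n] (M : Matrix m n K)
    (hM : M.rank ≤ 1) : ∃ (v : m → K) (φ : n → K), M = vecMulVec v φ := by
  classical
  obtain ⟨v, hv⟩ := finrank_le_one_iff.1 hM
  choose φ hφ using fun j => hv ⟨M *ᵥ Pi.single j 1, Pi.single j 1, rfl⟩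
  refine ⟨v, φ, ext fun i j => ?_⟩
  simpa [vecMulVec_apply, mul_comm] using (congrFun (congrArg Subtype.val (hφ j)) i).symm

end DiagonalPlusRankOne

section FiniteOrder

open Matrix Polynomial

lemma finite_setOf_pi_units_pow_eq_one {ι R : Type*} [Finite ι] [CommRing R] [IsDomain R] {n : ℕ}
    (hn : 0 < n) : {d : ι → Rˣ | d ^ n = 1}.Finite :=
  have : NeZero n := ⟨hn.ne'⟩
  have finite_roots : (rootsOfUnity n R : Set Rˣ).Finite :=
    Set.finite_coe_iff.1 (inferInstanceAs (Finite (rootsOfUnity n R)))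
  (Set.Finite.pi' fun _ => finite_roots).subset fun _ hd i => congrFun hd i

variable {ι R K : Type*} [Fintype ι] [DecidableEq ι] [CommRing R] [Field K]

lemma charpoly_root_pow_eq_one {M : Matrix ι ι K} {N : ℕ} (hM : M ^ N = 1) {z : K}
    (hz : z ∈ M.charpoly.roots) : z ^ N = 1 := by
  cases isEmpty_or_nonempty ι
  · simp [charpoly_isEmpty] at hz
  have := spectrum.pow_mem_pow M N (mem_spectrum_of_isRoot_charpoly (isRoot_of_mem_roots hz))
  simpa [hM, spectrum.one_eq] using this

lemma finite_setOf_charpoly_of_pow_eq_one [IsAlgClosed K] {N : ℕ} (hN : 0 < N) :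
    {χ : K[X] | ∃ M : Matrix ι ι K, M ^ N = 1 ∧ M.charpoly = χ}.Finite := by
  classical
  set bound : Multiset K := Fintype.card ι • (nthRootsFinset N (1 : K)).val
  refine ((Set.finite_Iic bound).image fun s => (s.map fun a => X - C a).prod).subset ?_
  rintro _ ⟨M, hM, rfl⟩
  have splits := IsAlgClosed.splits M.charpoly
  refine ⟨M.charpoly.roots, Multiset.le_iff_count.2 fun z => ?_,
    (splits.eq_prod_roots_of_monic M.charpoly_monic).symm⟩
  by_cases hz : z ∈ M.charpoly.roots
  · have card_roots : M.charpoly.roots.card = Fintype.card ι := by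
      rw [← splits.natDegree_eq_card_roots, charpoly_natDegree_eq_dim]
    have hzN : z ∈ nthRootsFinset N (1 : K) :=
      (mem_nthRootsFinset hN _).2 (charpoly_root_pow_eq_one hM hz)
    calc M.charpoly.roots.count z ≤ Fintype.card ι := card_roots ▸ Multiset.count_le_card z _
      _ = bound.count z := by
        rw [Multiset.count_nsmul, Multiset.count_eq_one_of_mem (Finset.nodup _) hzN, mul_one]
  · simp [Multiset.count_eq_zero_of_notMem hz]

lemma units_smul_pow (c : Rˣ) (A : GL ι R) (n : ℕ) : (c • A) ^ n = c ^ n • A ^ n :=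
  Units.ext <| by
    simpa only [Units.val_pow_eq_pow_val, Units.val_smul, Units.smul_def] using
      _root_.smul_pow (c : R) (A : Matrix ι ι R) n

lemma pow_eq_one_of_pow_eq_smul_one {B : GL ι R} {c : Rˣ} {m r : ℕ} (hB : B ^ m = c • 1)
    (hdet : B.det ^ r = 1) : B ^ (m * (Fintype.card ι * r)) = 1 := by
  have hc : c ^ (Fintype.card ι * r) = 1 := by
    have : c ^ Fintype.card ι = B.det ^ m := by
      rw [← map_pow, hB]
      ext
      simp [Units.smul_def]
    rw [pow_mul, this, pow_right_comm, hdet, one_pow]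
  rw [pow_mul, hB, units_smul_pow, one_pow, hc, one_smul]

lemma inv_smul_pow_eq_one_of_hasEigenvalue {M : GL ι K} {c z : Kˣ} {n : ℕ} (hM : M ^ n = c • 1)
    (hz : Module.End.HasEigenvalue (mulVecLin (M : Matrix ι ι K)) z) : (z⁻¹ • M) ^ n = 1 := by
  obtain ⟨w, hw⟩ := hz.exists_hasEigenvector
  have eigen_pow : ((M ^ n : GL ι K) : Matrix ι ι K) *ᵥ w = (z ^ n : K) • w := by
    have := hw.pow_apply n
    rwa [← Matrix.toLin'_apply', ← Matrix.toLin'_pow, Matrix.toLin'_apply] at this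
  have hzc : z ^ n = c := Units.ext <| smul_left_injective K hw.2 <| by
    simpa [hM, Units.smul_def, smul_mulVec] using eigen_pow.symm
  rw [units_smul_pow, hM, smul_smul, inv_pow, hzc, inv_mul_cancel, one_smul]

lemma rank_inv_smul_sub_one_add_finrank_eigenspace (M : GL ι K) (z : Kˣ) :
    ((z⁻¹ • M : GL ι K) - 1 : Matrix ι ι K).rank +
      Module.finrank K (Module.End.eigenspace (mulVecLin (M : Matrix ι ι K)) z) =
        Fintype.card ι := by
  have ker_eq : Module.End.eigenspace (mulVecLin (M : Matrix ι ι K)) z =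
      (mulVecLin ((z⁻¹ • M : GL ι K) - 1 : Matrix ι ι K)).ker := by
    ext w
    rw [Module.End.mem_eigenspace_iff, LinearMap.mem_ker, mulVecLin_apply, mulVecLin_apply,
      sub_mulVec, one_mulVec, sub_eq_zero, Units.val_smul, Units.smul_def, smul_mulVec,
      Units.val_inv_eq_inv_val, inv_smul_eq_iff₀ z.ne_zero]
  rw [ker_eq, rank, LinearMap.finrank_range_add_finrank_ker, Module.finrank_fintype_fun_eq_card]

end FiniteOrder

section SimultaneousConjugacy

open Matrix

variable {ι R K : Type*} [Fintype ι] [DecidableEq ι] [CommRing R] [Field K]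

/-- The embedding of the diagonal torus `(Rˣ)^ι` in `GL ι R`. -/
def diagonalGL : (ι → Rˣ) →* GL ι R :=
  (Units.map (diagonalRingHom ι R).toMonoidHom).comp MulEquiv.piUnits.symm.toMonoidHom

lemma coe_diagonalGL (d : ι → Rˣ) :
    (diagonalGL d : Matrix ι ι R) = diagonal fun i => (d i : R) := rfl

lemma coe_diagonalGL_inv (d : ι → Rˣ) :
    ((diagonalGL d)⁻¹ : GL ι R) = diagonal fun i => ((d i)⁻¹ : Rˣ).1 := rfl

lemma diagonalGL_injective : Function.Injective (diagonalGL : (ι → Rˣ) → GL ι R) :=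
  fun _ _ h => funext fun i => Units.ext (congrFun (diagonal_injective (congrArg Units.val h)) i)

lemma smul_diagonalGL (c : Rˣ) (d : ι → Rˣ) : c • diagonalGL d = diagonalGL (c • d) := by
  ext i j
  by_cases h : i = j <;> simp [coe_diagonalGL, h, Units.smul_def]

lemma ne_zero_of_hasEigenvalue {M : GL ι K} {μ : K}
    (hμ : Module.End.HasEigenvalue (mulVecLin (M : Matrix ι ι K)) μ) : μ ≠ 0 := by
  rintro rfl
  obtain ⟨w, hw⟩ := hμ.exists_hasEigenvector
  refine hw.2 (mulVec_injective_of_isUnit M.isUnit ?_)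
  simpa using hw.apply_eq_smul

lemma exists_conj_eq_diagonal {M : GL ι K} {a : ι → K} (ha : Function.Injective a)
    (hM : ∀ i, Module.End.HasEigenvalue (mulVecLin (M : Matrix ι ι K)) (a i)) :
    ∃ d : ι → Kˣ, Function.Injective d ∧ IsConj M (diagonalGL d) := by
  choose v hv using fun i => (hM i).exists_hasEigenvector
  have independent := Module.End.eigenvectors_linearIndependent' _ a ha v hv
  obtain ⟨Q, hQ⟩ : IsUnit (of v)ᵀ :=
    isUnit_transpose _ |>.2 (linearIndependent_rows_iff_isUnit.1 independent)
  refine ⟨fun i => Units.mk0 (a i) (ne_zero_of_hasEigenvalue (hM i)),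
    fun i j h => ha (congrArg Units.val h), (isConj_iff.2 ⟨Q, ?_⟩).symm⟩
  rw [mul_inv_eq_iff_eq_mul]
  ext i j
  rw [Units.val_mul, Units.val_mul, hQ, coe_diagonalGL, mul_diagonal]
  have eigen : (M *ᵥ v j) i = v j i * a j := by
    simpa [mul_comm] using congrFun (hv j).apply_eq_smul i
  simpa [mul_apply, mulVec, dotProduct] using eigen.symm

lemma conj_one_add_vecMulVec {A : GL ι R} {v φ : ι → R}
    (hA : (A : Matrix ι ι R) = 1 + vecMulVec v φ) (t : ι → Rˣ) :
    (diagonalGL t * A * (diagonalGL t)⁻¹ : GL ι R) =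
      1 + vecMulVec (fun i => t i * v i) (fun i => φ i * ((t i)⁻¹ : Rˣ)) := by
  ext i j
  rw [Units.val_mul, Units.val_mul, hA, coe_diagonalGL, coe_diagonalGL_inv, mul_diagonal,
    diagonal_mul]
  by_cases h : i = j
  · subst h
    simp [vecMulVec_apply, mul_add, add_mul, mul_assoc]
  · simp [vecMulVec_apply, h, mul_assoc]

lemma exists_units_normalize (a b : K) :
    ∃ t : Kˣ, t * a = 1 ∨ t * a = 0 ∧ (b * (t⁻¹ : Kˣ) = 0 ∨ b * (t⁻¹ : Kˣ) = 1) := by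
  by_cases ha : a = 0
  · by_cases hb : b = 0
    · exact ⟨1, by simp [ha, hb]⟩
    · exact ⟨Units.mk0 b hb, by simp [ha, hb]⟩
  · exact ⟨(Units.mk0 a ha)⁻¹, by simp [ha]⟩

variable (ι K) in
/-- Pairs `(A, D)` with `D` diagonal of order dividing `n` with distinct entries, `A D` of order
dividing `N`, and `A = 1 + v φᵀ` a pseudo-reflection rescaled by the torus: each `v i` is `1`, or
it is `0` and `φ i` is `0` or `1`. -/
def normalizedPairs (n N : ℕ) : Set (GL ι K × GL ι K) :=
  {q | ∃ (d : ι → Kˣ) (v φ : ι → K), Function.Injective d ∧ d ^ n = 1 ∧ q.2 = diagonalGL d ∧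
    (q.1 : Matrix ι ι K) = 1 + vecMulVec v φ ∧ (q.1 * q.2) ^ N = 1 ∧
    ∀ i, v i = 1 ∨ v i = 0 ∧ (φ i = 0 ∨ φ i = 1)}

lemma finite_setOf_mul_apply [IsAlgClosed K] {n N : ℕ} (hn : 0 < n) (hN : 0 < N) :
    {c : K | ∃ (d : ι → Kˣ) (v φ : ι → K), Function.Injective d ∧ d ^ n = 1 ∧
      ((1 + vecMulVec v φ) * diagonal fun i => (d i : K)) ^ N = 1 ∧ ∃ i, v i * φ i = c}.Finite := by
  refine (((finite_setOf_pi_units_pow_eq_one hn).prod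
    ((finite_setOf_charpoly_of_pow_eq_one (ι := ι) (K := K) hN).prod Set.finite_univ)).image
      fun q : (ι → Kˣ) × Polynomial K × ι => -q.2.1.eval (q.1 q.2.2 : K) /
        (q.1 q.2.2 * ∏ j ∈ Finset.univ.erase q.2.2, ((q.1 q.2.2 : K) - q.1 j))).subset ?_
  rintro _ ⟨d, v, φ, hd, hdn, hN, i, rfl⟩
  exact ⟨(d, _, i), ⟨hdn, ⟨_, hN, rfl⟩, trivial⟩,
    (mul_apply_eq_eval_charpoly_div (Units.val_injective.comp hd) (d i).ne_zero v φ).symm⟩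

lemma finite_normalizedPairs [IsAlgClosed K] {n N : ℕ} (hn : 0 < n) (hN : 0 < N) :
    (normalizedPairs ι K n N).Finite := by
  set entries : Set K := {0, 1} ∪ _ with h_entries
  have finite_entries : entries.Finite :=
    (Set.toFinite {0, 1}).union (finite_setOf_mul_apply (ι := ι) (K := K) hn hN)
  have finite_vectors : {v : ι → K | ∀ i, v i ∈ entries}.Finite :=
    Set.Finite.pi' fun _ => finite_entries
  refine Set.Finite.of_finite_image (f := fun q => ((q.1 : Matrix ι ι K), q.2)) ?_
    fun q _ q' _ h => by simpa [Prod.ext_iff, Units.ext_iff] using h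
  refine (((finite_setOf_pi_units_pow_eq_one hn).prod (finite_vectors.prod finite_vectors)).image
    fun x => (1 + vecMulVec x.2.1 x.2.2, diagonalGL x.1)).subset ?_
  rintro _ ⟨⟨A, D⟩, ⟨d, v, φ, hd, hdn, rfl, hA, hAD, hnormal⟩, rfl⟩
  refine ⟨(d, v, φ), ⟨hdn, fun i => ?_, fun i => ?_⟩, Prod.ext hA.symm rfl⟩
  · rcases hnormal i with hv | ⟨hv, -⟩ <;> simp [h_entries, hv]
  · rcases hnormal i with hv | ⟨-, hφ⟩
    · refine .inr ⟨d, v, φ, hd, hdn, ?_, i, by simp [hv]⟩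
      rw [← hA, ← coe_diagonalGL]
      exact congrArg Units.val hAD
    · exact .inl (by simpa using hφ)

lemma rank_conj_sub_one (P A : GL ι R) :
    ((P * A * P⁻¹ : GL ι R) - 1 : Matrix ι ι R).rank = ((A : Matrix ι ι R) - 1).rank := by
  have : ((P * A * P⁻¹ : GL ι R) - 1 : Matrix ι ι R) = P * (A - 1) * (P⁻¹ : GL ι R) := by
    rw [mul_sub, sub_mul, mul_one, Units.mul_inv, Units.val_mul, Units.val_mul]
  rw [this, rank_mul_eq_left_of_isUnit_det _ _ ((isUnit_iff_isUnit_det _).1 P⁻¹.isUnit),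
    rank_mul_eq_right_of_isUnit_det _ _ ((isUnit_iff_isUnit_det _).1 P.isUnit)]

theorem exists_conj_mem_normalizedPairs {A D : GL ι K} {d : ι → Kˣ} {n N : ℕ}
    (hA : ((A : Matrix ι ι K) - 1).rank ≤ 1) (hD : IsConj D (diagonalGL d))
    (hd : Function.Injective d) (hDn : D ^ n = 1) (hAD : (A * D) ^ N = 1) :
    ∃ g : GL ι K, (g * A * g⁻¹, g * D * g⁻¹) ∈ normalizedPairs ι K n N := by
  obtain ⟨P, hP⟩ := isConj_iff.1 hD
  obtain ⟨v, φ, hvφ⟩ := exists_eq_vecMulVec_of_rank_le_one _ ((rank_conj_sub_one P A).trans_le hA)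
  choose t ht using fun i => exists_units_normalize (v i) (φ i)
  have hconj := conj_one_add_vecMulVec (sub_eq_iff_eq_add'.1 hvφ) t
  refine ⟨diagonalGL t * P, d, _, _, hd, ?_, ?_, ?_, ?_, ht⟩
  · apply diagonalGL_injective
    rw [map_pow, map_one, ← hP, conj_pow, hDn, mul_one, mul_inv_cancel]
  · calc diagonalGL t * P * D * (diagonalGL t * P)⁻¹
        = diagonalGL t * (P * D * P⁻¹) * (diagonalGL t)⁻¹ := by group
      _ = diagonalGL d := by rw [hP, ← map_inv, ← map_mul, ← map_mul, mul_inv_cancel_comm]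
  · rw [← hconj]
    congr 1
    group
  · rw [conj_mul, conj_pow, hAD, mul_one, mul_inv_cancel]

end SimultaneousConjugacy

section ProjectiveLifts

open Matrix

lemma mk_eq_one_iff_exists_smul_one {A : GL3} : (A : PGL3) = 1 ↔ ∃ c : ℂˣ, A = c • 1 := by
  rw [QuotientGroup.eq_one_iff]
  refine exists_congr fun c => eq_comm.trans ?_
  rw [Units.ext_iff, Units.ext_iff]
  simp [Units.smul_def, smul_one_eq_diagonal]

lemma mk_units_smul (c : ℂˣ) (A : GL3) : ((c • A : GL3) : PGL3) = A := by
  have : c • A = c • (1 : GL3) * A := Units.ext (by simp [Units.smul_def])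
  rw [this, QuotientGroup.mk_mul, mk_eq_one_iff_exists_smul_one.2 ⟨c, rfl⟩, one_mul]

lemma exists_reflection_lift {y : PGL3} {p : ℕ} (hy : IsComplexReflection y ∨ y = 1)
    (hyp : y ^ p = 1) :
    ∃ A : GL3, (A : PGL3) = y ∧ A ^ p = 1 ∧ ((A : Matrix (Fin 3) (Fin 3) ℂ) - 1).rank ≤ 1 := by
  rcases hy with ⟨M, rfl, -, -, μ, hμ⟩ | rfl
  · have eigen : Module.End.HasEigenvalue (mulVecLin (M : Matrix (Fin 3) (Fin 3) ℂ)) μ := by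
      rw [Module.End.hasEigenvalue_iff, ← Submodule.one_le_finrank_iff, hμ]
      exact one_le_two
    obtain ⟨c, hc⟩ := mk_eq_one_iff_exists_smul_one.1 hyp
    lift μ to ℂˣ using isUnit_iff_ne_zero.2 (ne_zero_of_hasEigenvalue eigen)
    refine ⟨μ⁻¹ • M, mk_units_smul _ _, inv_smul_pow_eq_one_of_hasEigenvalue hc eigen, ?_⟩
    have := rank_inv_smul_sub_one_add_finrank_eigenspace M μ
    rw [hμ, Fintype.card_fin] at this
    omega
  · exact ⟨1, rfl, one_pow p, by simp⟩

lemma IsRegularElliptic.exists_lift {x : PGL3} {n : ℕ} (hx : IsRegularElliptic x)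
    (hxn : x ^ n = 1) :
    ∃ (D : GL3) (d : Fin 3 → ℂˣ), (D : PGL3) = x ∧ D ^ n = 1 ∧ Function.Injective d ∧
      IsConj D (diagonalGL d) := by
  obtain ⟨M, rfl, -, a, b, c, hab, hac, hbc, ha, hb, hc⟩ := hx
  have distinct : Function.Injective ![a, b, c] := by
    intro i j
    fin_cases i <;> fin_cases j <;> simp [hab, hac, hbc, hab.symm, hac.symm, hbc.symm]
  obtain ⟨d, hd, hMd⟩ := exists_conj_eq_diagonal (M := M) distinct
    (by intro i; fin_cases i <;> assumption)
  obtain ⟨s, hs⟩ := mk_eq_one_iff_exists_smul_one.1 hxn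
  obtain ⟨P, hP⟩ := isConj_iff.1 hMd
  lift a to ℂˣ using isUnit_iff_ne_zero.2 (ne_zero_of_hasEigenvalue ha)
  refine ⟨a⁻¹ • M, a⁻¹ • d, mk_units_smul _ _, inv_smul_pow_eq_one_of_hasEigenvalue hs ha,
    (MulAction.injective a⁻¹).comp hd, isConj_iff.2 ⟨P, ?_⟩⟩
  rw [← smul_diagonalGL, ← hP]
  ext1
  simp [Units.smul_def]

lemma exists_conj_mem_image_normalizedPairs {x y : PGL3} {n p m : ℕ} (hx : IsRegularElliptic x)
    (hy : IsComplexReflection y ∨ y = 1) (hxn : x ^ n = 1) (hyp : y ^ p = 1)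
    (hyx : (y * x) ^ m = 1) :
    ∃ g : PGL3, (g * y * g⁻¹, g * x * g⁻¹) ∈
      Prod.map QuotientGroup.mk QuotientGroup.mk ''
        normalizedPairs (Fin 3) ℂ n (m * (3 * (p * n))) := by
  obtain ⟨A, rfl, hAp, hA⟩ := exists_reflection_lift hy hyp
  obtain ⟨D, d, rfl, hDn, hd, hD⟩ := hx.exists_lift hxn
  obtain ⟨c, hc⟩ := mk_eq_one_iff_exists_smul_one (A := (A * D) ^ m).1 hyx
  have det_pow : (A * D).det ^ (p * n) = 1 := by
    rw [map_mul, mul_pow, ← map_pow, ← map_pow, pow_mul, hAp, pow_mul', hDn]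
    simp
  obtain ⟨g, hg⟩ := exists_conj_mem_normalizedPairs hA hD hd hDn
    (pow_eq_one_of_pow_eq_smul_one hc det_pow)
  exact ⟨g, _, hg, rfl⟩

end ProjectiveLifts

section Representations

variable {Γ : Type*} [Group Γ]

lemma conjRel_of_conj_eq {J R : Γ} (hgen : Subgroup.closure {J, R} = ⊤) {ρ ρ' : Γ →* PGL3}
    {g g' : PGL3} (hR : g * ρ R * g⁻¹ = g' * ρ' R * g'⁻¹)
    (hJ : g * ρ J * g⁻¹ = g' * ρ' J * g'⁻¹) : ConjRel ρ ρ' := by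
  have agree : (MulAut.conj g).toMonoidHom.comp ρ = (MulAut.conj g').toMonoidHom.comp ρ' :=
    MonoidHom.eq_of_eqOn_dense hgen <| by
      rintro γ (rfl | rfl)
      exacts [hJ, hR]
  refine ⟨g'⁻¹ * g, fun γ => ?_⟩
  have hγ : g * ρ γ * g⁻¹ = g' * ρ' γ * g'⁻¹ := DFunLike.congr_fun agree γ
  calc ρ' γ = g'⁻¹ * (g' * ρ' γ * g'⁻¹) * g' := by group
    _ = g'⁻¹ * g * ρ γ * (g'⁻¹ * g)⁻¹ := by rw [← hγ]; group

theorem typePreserving_reps_finite_general {J R : Γ} (hgen : Subgroup.closure {J, R} = ⊤)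
    (hJ : IsOfFinOrder J) (hR : IsOfFinOrder R) (hRJ : IsOfFinOrder (R * J)) :
    Finite (Quot fun ρ ρ' : {ρ : Γ →* PGL3 // TypePreserving ρ J R} => ConjRel ρ.1 ρ'.1) := by
  set T := Prod.map (QuotientGroup.mk : GL3 → PGL3) (QuotientGroup.mk : GL3 → PGL3) ''
    normalizedPairs (Fin 3) ℂ (orderOf J) (orderOf (R * J) * (3 * (orderOf R * orderOf J)))
  have finite_T : T.Finite := by
    have := hJ.orderOf_pos
    have := hR.orderOf_pos
    have := hRJ.orderOf_pos
    exact (finite_normalizedPairs (by positivity) (by positivity)).image _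
  have exists_conj (ρ : {ρ : Γ →* PGL3 // TypePreserving ρ J R}) :
      ∃ g : PGL3, (g * ρ.1 R * g⁻¹, g * ρ.1 J * g⁻¹) ∈ T :=
    exists_conj_mem_image_normalizedPairs ρ.2.2 ρ.2.1
      (by rw [← map_pow, pow_orderOf_eq_one, map_one])
      (by rw [← map_pow, pow_orderOf_eq_one, map_one])
      (by rw [← map_mul, ← map_pow, pow_orderOf_eq_one, map_one])
  choose g hg using exists_conj
  have := finite_T.to_subtype
  refine Finite.of_injective (fun q => (⟨_, hg q.out⟩ : T)) fun q q' h => ?_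
  obtain ⟨h_R, h_J⟩ := Prod.ext_iff.1 (congrArg Subtype.val h)
  rw [← q.out_eq, ← q'.out_eq]
  exact Quot.sound (conjRel_of_conj_eq hgen h_R h_J)

end Representations

section Presentations

open FreeGroup

lemma isOfFinOrder_mk_of_pow_mem {α : Type*} {rels : Set (FreeGroup α)} {w : FreeGroup α} {n : ℕ}
    (hn : 0 < n) (hw : w ^ n ∈ rels) : IsOfFinOrder (PresentedGroup.mk rels w) :=
  isOfFinOrder_iff_pow_eq_one.2 ⟨n, hn, by rw [← map_pow, PresentedGroup.one_of_mem hw]⟩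

lemma closure_of_J_R_eq_top (rels : Set (FreeGroup Gen2)) :
    Subgroup.closure {PresentedGroup.of (rels := rels) Gen2.J, PresentedGroup.of Gen2.R} = ⊤ := by
  rw [eq_top_iff, ← PresentedGroup.closure_range_of rels]
  refine Subgroup.closure_mono ?_
  rintro _ ⟨_ | _, rfl⟩ <;> simp

lemma finite_typePreserving_presentedGroup {rels : Set (FreeGroup Gen2)} {n p m : ℕ} (hn : 0 < n)
    (hp : 0 < p) (hm : 0 < m) (hJ : of Gen2.J ^ n ∈ rels) (hR : of Gen2.R ^ p ∈ rels)
    (hRJ : (of Gen2.R * of Gen2.J) ^ m ∈ rels) :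
    Finite (Quot fun ρ ρ' : {ρ : PresentedGroup rels →* PGL3 //
      TypePreserving ρ (PresentedGroup.of Gen2.J) (PresentedGroup.of Gen2.R)} =>
        ConjRel ρ.1 ρ'.1) :=
  typePreserving_reps_finite_general (closure_of_J_R_eq_top rels)
    (isOfFinOrder_mk_of_pow_mem hn hJ) (isOfFinOrder_mk_of_pow_mem hp hR)
    (isOfFinOrder_mk_of_pow_mem hm hRJ)

end Presentations

/-- For each of the listed type two, type three and type four 3-fold Deligne-Mostow lattices,
the set of type-preserving representations into `PGL(3,ℂ)` modulo conjugation is finite. -/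
theorem typePreserving_reps_finite :
    (∀ p k l : ℕ, (p, k) ∈ ({(6,4), (6,6), (3,7), (3,8), (3,9), (3,10), (3,12), (4,5), (4,6), (4,8), (5,4), (5,5)} : Set (ℕ × ℕ)) → 0 < l →
      (1 : ℚ) / l = 1 / 2 - 1 / p - 1 / k →
      Finite (Quot (fun (ρ ρ' : {ρ : GammaTwo p k l →* PGL3 //
        TypePreserving ρ (PresentedGroup.of Gen2.J) (PresentedGroup.of Gen2.R)}) =>
      ConjRel ρ.1 ρ'.1))) ∧
    (∀ p k d : ℕ, (p, k) ∈ ({(7,2), (8,2), (9,2), (10,2), (12,2), (18,2)} : Set (ℕ × ℕ)) → 0 < d →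
      (1 : ℚ) / d = 1 / 2 - 3 / p →
      Finite (Quot (fun (ρ ρ' : {ρ : GammaThree p k d →* PGL3 //
        TypePreserving ρ (PresentedGroup.of Gen2.J) (PresentedGroup.of Gen2.R)}) =>
      ConjRel ρ.1 ρ'.1))) ∧
    (∀ p k l d : ℕ, (p, k) ∈ ({(7,3), (8,3), (8,4), (9,3), (10,3), (10,5), (12,3), (12,6), (18,3)} : Set (ℕ × ℕ)) → 0 < l → 0 < d →
      (1 : ℚ) / l = 1 / 2 - 1 / p - 1 / k → (1 : ℚ) / d = 1 / 2 - 3 / p →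
      Finite (Quot (fun (ρ ρ' : {ρ : GammaFour p k l d →* PGL3 //
        TypePreserving ρ (PresentedGroup.of Gen2.J) (PresentedGroup.of Gen2.R)}) =>
      ConjRel ρ.1 ρ'.1))) := by
  refine ⟨fun p k l hpk _ _ => ?_, fun p k d hpk _ _ => ?_, fun p k l d hpk _ _ _ _ => ?_⟩
  all_goals
    have pos : 0 < p ∧ 0 < 2 * k := by
      simp only [Set.mem_insert_iff, Set.mem_singleton_iff, Prod.mk.injEq] at hpk
      omega
    apply finite_typePreserving_presentedGroup three_pos pos.1 pos.2 <;>
      simp [relsTwo, relsThree, relsFour]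
end
end

section
/- Let Γ be any one of the type three Deligne-Mostow groups Γ₃(p,k) for (p,k) in {(7,2), (8,2), (9,2), (10,2), (12,2), (18,2)}. Then every type-preserving homomorphism ρ: Γ → PGL(3,ℂ) is conjugate in PGL(3,ℂ) to a homomorphism ρ' such that ρ'(J) and ρ'(R₁) admit lifts to GL(3,ℂ) all of whose matrix entries lie in a cyclotomic extension of ℚ inside ℂ, i.e. in ℚ(ζ_n) for some positive integer n, where ζ_n = exp(2πi/n). -/
noncomputable section

/-!
Lift `J` to a matrix `M` of finite order with distinct eigenvalues and `R₁` to `R` with `R - 1` of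
rank at most one. The relations force `R` and `R * M` to have finite order: a power of `R` is scalar
and `R` has eigenvalue `1`, while a power of `R * M` is scalar and its determinant is a root of
unity. In an eigenbasis of `M` we have `M = diagonal d` and `R = 1 + v fᵀ`, and at `d i` the
characteristic polynomial of `R * M` takes the value
`-(v i * f i * d i) * ∏_{j ≠ i} (d i - d j)`. Its roots and the `d i` are roots of unity, so every
`v i * f i` lies in a cyclotomic field, and a diagonal change of basis moves all the entries of
`v` and `f` into that field.
-/

section MatrixLemmas

open Matrix

variable {ι L : Type*} [Field L] {K : Subfield L} {n : ℕ}

theorem exists_units_mul_mem {v f : ι → L} (h : ∀ i, v i * f i ∈ K) :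
    ∃ t : ι → Lˣ, (∀ i, t i * v i ∈ K) ∧ ∀ i, f i * (t i)⁻¹ ∈ K := by
  have key (i : ι) : ∃ t : Lˣ, t * v i ∈ K ∧ f i * t⁻¹ ∈ K := by
    by_cases hv : v i = 0
    · by_cases hf : f i = 0
      · exact ⟨1, by simp [hv], by simp [hf]⟩
      · exact ⟨Units.mk0 (f i) hf, by simp [hv], by simp [hf]⟩
    · exact ⟨(Units.mk0 (v i) hv)⁻¹, by simp [hv], by simpa [mul_comm] using h i⟩
  choose t ht using key
  exact ⟨t, fun i => (ht i).1, fun i => (ht i).2⟩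

theorem exists_eq_vecMulVec_of_rank_le_one_s19 {κ : Type*} [Fintype ι] {X : Matrix κ ι L}
    (hX : X.rank ≤ 1) : ∃ (v : κ → L) (f : ι → L), X = vecMulVec v f := by
  classical
  obtain ⟨v, hv⟩ := finrank_le_one_iff.mp hX
  choose f hf using fun j => hv ⟨X.mulVecLin (Pi.single j 1), LinearMap.mem_range_self _ _⟩
  refine ⟨v, f, ?_⟩
  ext i j
  simpa [vecMulVec_apply, mul_comm] using (congrFun (congrArg Subtype.val (hf j)) i).symm

variable [Fintype ι] [DecidableEq ι]

theorem det_diagonal_sub_vecMulVec_of_apply_eq_zero {A : Type*} [CommRing A] {c : ι → A} {i : ι}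
    (hc : c i = 0) (v g : ι → A) :
    (diagonal c - vecMulVec v g).det = -(v i * g i) * ∏ j ∈ Finset.univ.erase i, c j := by
  have hrow : diagonal c - vecMulVec v g =
      ((diagonal c - vecMulVec v g).updateRow i g).updateRow i (-v i • g) := by
    ext j k
    rcases eq_or_ne j i with rfl | hj
    · rcases eq_or_ne j k with rfl | hk <;> simp [vecMulVec_apply, *]
    · simp [hj]
  -- Row `i` is now `g`, a multiple of which clears the rank-one part of each other row.
  have hclear : ((diagonal c - vecMulVec v g).updateRow i g).det =
      ((diagonal c).updateRow i g).det := by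
    refine det_eq_of_forall_row_eq_smul_add_const (Function.update (-v) i 0) i (by simp) ?_
    intro j k
    rcases eq_or_ne j i with rfl | hj
    · simp
    · simp [hj, vecMulVec_apply, sub_eq_add_neg]
  rw [hrow, det_updateRow_smul, updateRow_idem, hclear, ← cramer_transpose_apply,
    diagonal_transpose, cramer_eq_adjugate_mulVec, adjugate_diagonal, mulVec_diagonal]
  ring

theorem eval_charpoly_diagonal_add_vecMulVec {A : Type*} [CommRing A] (d v g : ι → A) (i : ι) :
    (diagonal d + vecMulVec v g).charpoly.eval (d i) =
      -(v i * g i) * ∏ j ∈ Finset.univ.erase i, (d i - d j) := by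
  have hsub : scalar ι (d i) - (diagonal d + vecMulVec v g) =
      diagonal (fun j => d i - d j) - vecMulVec v g := by
    rw [← sub_sub, scalar_apply, diagonal_sub]
  rw [eval_charpoly, hsub, det_diagonal_sub_vecMulVec_of_apply_eq_zero (sub_self _)]

theorem rank_sub_smul_one_add_finrank_eigenspace (X : Matrix ι ι L) (μ : L) :
    (X - μ • 1).rank + Module.finrank L (Module.End.eigenspace X.mulVecLin μ) =
      Fintype.card ι := by
  have hker : Module.End.eigenspace X.mulVecLin μ = LinearMap.ker (X - μ • 1).mulVecLin := by
    ext w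
    simp [sub_eq_zero]
  rw [hker, rank, LinearMap.finrank_range_add_finrank_ker, Module.finrank_fintype_fun_eq_card]

theorem exists_conj_eq_diagonal_s19 {X : Matrix ι ι L} {d : ι → L} (hd : Function.Injective d)
    (hX : ∀ i, Module.End.HasEigenvalue X.mulVecLin (d i)) :
    ∃ P : GL ι L, (P : Matrix ι ι L) * X * (P⁻¹ : GL ι L) = diagonal d := by
  choose w hw using fun i => (hX i).exists_hasEigenvector
  have hli : LinearIndependent L w := Module.End.eigenvectors_linearIndependent' _ d hd w hw
  obtain ⟨Q, hQ⟩ : IsUnit (of w)ᵀ := linearIndependent_cols_iff_isUnit.mp hli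
  have hXQ : X * Q = Q * diagonal d := by
    ext i j
    have := congrFun (hw j).apply_eq_smul i
    rw [hQ, mul_diagonal]
    simpa [mul_apply, mulVec, dotProduct, mul_comm] using this
  exact ⟨Q⁻¹, by rw [inv_inv, mul_assoc, hXQ, ← mul_assoc, Units.inv_mul, one_mul]⟩

theorem isOfFinOrder_of_one_mem_spectrum_of_pow_eq_scalar {X : GL ι L} {q : ℕ}
    {u : Lˣ} (hq : 0 < q) (h1 : (1 : L) ∈ spectrum L (X : Matrix ι ι L))
    (hX : X ^ q = GeneralLinearGroup.scalar ι u) : IsOfFinOrder X := by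
  rcases isEmpty_or_nonempty ι
  · exact Subsingleton.elim 1 X ▸ IsOfFinOrder.one
  have hX' : (X : Matrix ι ι L) ^ q = algebraMap L (Matrix ι ι L) u := congrArg Units.val hX
  have hu : u = 1 := by
    have := spectrum.pow_mem_pow (X : Matrix ι ι L) q h1
    rw [hX', spectrum.scalar_eq, one_pow] at this
    exact Units.ext this.symm
  exact isOfFinOrder_iff_pow_eq_one.mpr ⟨q, hq, by rw [hX, hu, map_one]⟩

theorem isOfFinOrder_of_det_of_pow_eq_scalar {X : GL ι L} {q : ℕ} {u : Lˣ}
    (hq : 0 < q) (hdet : IsOfFinOrder (GeneralLinearGroup.det X))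
    (hX : X ^ q = GeneralLinearGroup.scalar ι u) : IsOfFinOrder X := by
  rcases isEmpty_or_nonempty ι
  · exact Subsingleton.elim 1 X ▸ IsOfFinOrder.one
  have hu : IsOfFinOrder (u ^ Fintype.card ι) := by
    rw [← GeneralLinearGroup.det_scalar, ← hX, map_pow]
    exact hdet.pow
  have hscalar := (GeneralLinearGroup.scalar ι).isOfFinOrder (hu.of_pow Fintype.card_ne_zero)
  exact (hX ▸ hscalar).of_pow hq.ne'

theorem one_mem_spectrum_of_rank_sub_one_le_one [Nontrivial ι] {X : Matrix ι ι L}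
    (hX : (X - 1).rank ≤ 1) : (1 : L) ∈ spectrum L X := by
  obtain ⟨v, f, hvf⟩ := exists_eq_vecMulVec_of_rank_le_one_s19 hX
  rw [mem_spectrum_iff_isRoot_charpoly, Polynomial.IsRoot, eval_charpoly, map_one, ← neg_sub,
    hvf, det_neg, det_vecMulVec, mul_zero]

theorem eval_charpoly_mem_of_pow_eq_one [IsAlgClosed L] (hK : ∀ z : L, z ^ n = 1 → z ∈ K)
    {X : Matrix ι ι L} (hX : X ^ n = 1) {z : L} (hz : z ∈ K) : X.charpoly.eval z ∈ K := by
  rcases isEmpty_or_nonempty ι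
  · simp
  rw [(IsAlgClosed.splits _).eval_eq_prod_roots_of_monic X.charpoly_monic]
  refine K.multiset_prod_mem _ fun y hy => ?_
  obtain ⟨r, hr, rfl⟩ := Multiset.mem_map.mp hy
  have hrX : r ∈ spectrum L X :=
    mem_spectrum_iff_isRoot_charpoly.mpr (Polynomial.isRoot_of_mem_roots hr)
  exact sub_mem hz (hK r (by simpa [hX, spectrum.one_eq] using spectrum.pow_mem_pow X n hrX))

theorem mul_mem_of_diagonal_add_vecMulVec_pow_eq_one [IsAlgClosed L]
    (hK : ∀ z : L, z ^ n = 1 → z ∈ K) {d v g : ι → L} (hd : Function.Injective d)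
    (hdK : ∀ i, d i ∈ K) (hX : (diagonal d + vecMulVec v g) ^ n = 1) (i : ι) :
    v i * g i ∈ K := by
  set D := ∏ j ∈ Finset.univ.erase i, (d i - d j)
  have hD0 : D ≠ 0 := Finset.prod_ne_zero_iff.mpr fun j hj =>
    sub_ne_zero.mpr (hd.ne (Finset.ne_of_mem_erase hj).symm)
  have hDK : D ∈ K := prod_mem fun j _ => sub_mem (hdK i) (hdK j)
  have hvg : v i * g i = -(diagonal d + vecMulVec v g).charpoly.eval (d i) / D := by
    rw [eval_charpoly_diagonal_add_vecMulVec, neg_mul, neg_neg, mul_div_cancel_right₀ _ hD0]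
  rw [hvg]
  exact div_mem (neg_mem (eval_charpoly_mem_of_pow_eq_one hK hX (hdK i))) hDK

theorem exists_conj_mem_of_mul_mem {M R : GL ι L} {d v f : ι → L}
    (hM : (M : Matrix ι ι L) = diagonal d) (hR : (R : Matrix ι ι L) = 1 + vecMulVec v f)
    (hd : ∀ i, d i ∈ K) (hvf : ∀ i, v i * f i ∈ K) :
    ∃ Q : GL ι L, (∀ i j, (Q * M * Q⁻¹) i j ∈ K) ∧ ∀ i j, (Q * R * Q⁻¹) i j ∈ K := by
  obtain ⟨t, htv, htf⟩ := exists_units_mul_mem hvf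
  let T : GL ι L := Units.map (diagonalRingHom ι L).toMonoidHom (MulEquiv.piUnits.symm t)
  have hT : (T : Matrix ι ι L) = diagonal fun i => (t i : L) := rfl
  have hT' : ((T⁻¹ : GL ι L) : Matrix ι ι L) = diagonal fun i => ((t i)⁻¹ : L) := by simp [T]
  have hone (i j : ι) : (1 : Matrix ι ι L) i j ∈ K := by
    rw [one_apply]
    split_ifs
    exacts [one_mem K, zero_mem K]
  refine ⟨T, fun i j => ?_, fun i j => ?_⟩
  · have hTM : (T * M * T⁻¹) i j = d i * (1 : Matrix ι ι L) i j := by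
      rcases eq_or_ne i j with rfl | hij <;> simp [mul_comm, *]
    exact hTM ▸ mul_mem (hd i) (hone i j)
  · have hTR : (T * R * T⁻¹) i j = (1 : Matrix ι ι L) i j + t i * v i * (f j * (t j)⁻¹) := by
      rcases eq_or_ne i j with rfl | hij <;>
        simp [mul_add, add_mul, vecMulVec_apply, mul_assoc, *]
    exact hTR ▸ add_mem (hone i j) (mul_mem (htv i) (htf j))

theorem exists_conj_mem_of_eq_diagonal [IsAlgClosed L] (hK : ∀ z : L, z ^ n = 1 → z ∈ K)
    {M R : GL ι L} {d : ι → L} (hd : Function.Injective d) (hMd : (M : Matrix ι ι L) = diagonal d)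
    (hM : M ^ n = 1) (hR : ((R : Matrix ι ι L) - 1).rank ≤ 1) (hRM : (R * M) ^ n = 1) :
    ∃ Q : GL ι L, (∀ i j, (Q * M * Q⁻¹) i j ∈ K) ∧ ∀ i j, (Q * R * Q⁻¹) i j ∈ K := by
  have hdK (i : ι) : d i ∈ K := by
    have hpow : diagonal d ^ n = 1 := by rw [← hMd, ← Units.val_pow_eq_pow_val, hM, Units.val_one]
    exact hK _ (by simpa [diagonal_pow] using congrFun (congrFun hpow i) i)
  have hd0 (i : ι) : d i ≠ 0 := fun h =>
    M.det_ne_zero (by rw [hMd, det_diagonal, Finset.prod_eq_zero (Finset.mem_univ i) h])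
  obtain ⟨v, f, hvf⟩ := exists_eq_vecMulVec_of_rank_le_one_s19 hR
  rw [sub_eq_iff_eq_add'] at hvf
  have hRMval : ((R * M : GL ι L) : Matrix ι ι L) =
      diagonal d + vecMulVec v fun i => f i * d i := by
    rw [Units.val_mul, hvf, hMd, add_mul, one_mul, vecMulVec_mul]
    congr 2
    ext i
    exact vecMul_diagonal f d i
  have hX : (diagonal d + vecMulVec v fun i => f i * d i) ^ n = 1 := by
    rw [← hRMval, ← Units.val_pow_eq_pow_val, hRM, Units.val_one]
  refine exists_conj_mem_of_mul_mem hMd hvf hdK fun i => ?_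
  have := div_mem (mul_mem_of_diagonal_add_vecMulVec_pow_eq_one hK hd hdK hX i) (hdK i)
  rwa [← mul_assoc, mul_div_cancel_right₀ _ (hd0 i)] at this

theorem exists_conj_mem_of_hasEigenvalue [IsAlgClosed L] (hK : ∀ z : L, z ^ n = 1 → z ∈ K)
    {M R : GL ι L} {d : ι → L} (hd : Function.Injective d)
    (hMd : ∀ i, Module.End.HasEigenvalue (M : Matrix ι ι L).mulVecLin (d i))
    (hM : M ^ n = 1) (hR : ((R : Matrix ι ι L) - 1).rank ≤ 1) (hRM : (R * M) ^ n = 1) :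
    ∃ Q : GL ι L, (∀ i j, (Q * M * Q⁻¹) i j ∈ K) ∧ ∀ i j, (Q * R * Q⁻¹) i j ∈ K := by
  obtain ⟨P, hP⟩ := exists_conj_eq_diagonal_s19 hd hMd
  have hPR : (((P * R * P⁻¹ : GL ι L) : Matrix ι ι L) - 1).rank ≤ 1 := by
    have hconj : ((P * R * P⁻¹ : GL ι L) : Matrix ι ι L) - 1 =
        P * ((R : Matrix ι ι L) - 1) * (P⁻¹ : GL ι L) := by
      rw [mul_sub, sub_mul, mul_one, Units.mul_inv, Units.val_mul, Units.val_mul]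
    rw [hconj]
    exact (rank_mul_le_left _ _).trans ((rank_mul_le_right _ _).trans hR)
  obtain ⟨Q, hQM, hQR⟩ := exists_conj_mem_of_eq_diagonal hK hd (M := P * M * P⁻¹) hP
    (by rw [conj_pow, hM, mul_one, mul_inv_cancel]) hPR
    (by rw [conj_mul, conj_pow, hRM, mul_one, mul_inv_cancel])
  have hassoc (X : GL ι L) : Q * P * X * (Q * P)⁻¹ = Q * (P * X * P⁻¹) * Q⁻¹ := by group
  refine ⟨Q * P, fun i j => ?_, fun i j => ?_⟩
  · rw [hassoc]
    exact hQM i j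
  · rw [hassoc]
    exact hQR i j

end MatrixLemmas

section Cyclotomic

/-- The `n`-th cyclotomic field `ℚ(exp(2πi/n))`, as a subfield of `ℂ`; for `n = 0` the exponential
is `exp 0 = 1` and the field is `ℚ`. -/
def cyclotomicSubfield (n : ℕ) : Subfield ℂ :=
  (IntermediateField.adjoin ℚ {Complex.exp (2 * Real.pi * Complex.I / n)}).toSubfield

variable {n : ℕ} {z : ℂ}

theorem mem_cyclotomicSubfield_of_pow_eq_one (hn : n ≠ 0) (hz : z ^ n = 1) :
    z ∈ cyclotomicSubfield n := by
  have : NeZero n := ⟨hn⟩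
  obtain ⟨i, -, rfl⟩ := (Complex.isPrimitiveRoot_exp n hn).eq_pow_of_pow_eq_one hz
  exact pow_mem (IntermediateField.mem_adjoin_simple_self ℚ _) i

theorem mem_cyclotomicSubfield_iff (hn : n ≠ 0) :
    z ∈ cyclotomicSubfield n ↔
      z ∈ Algebra.adjoin ℚ {Complex.exp (2 * Real.pi * Complex.I / n)} := by
  have hζ : IsIntegral ℚ (Complex.exp (2 * Real.pi * Complex.I / n)) :=
    ((Complex.isPrimitiveRoot_exp n hn).isIntegral (Nat.pos_of_ne_zero hn)).tower_top
  rw [← IntermediateField.adjoin_simple_toSubalgebra_of_isAlgebraic hζ.isAlgebraic]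
  rfl

end Cyclotomic

section Lifts

open Matrix

theorem exists_pow_eq_scalar_of_isOfFinOrder_mk {X : GL3}
    (hX : IsOfFinOrder (QuotientGroup.mk X : PGL3)) :
    ∃ q : ℕ, 0 < q ∧ ∃ u : ℂˣ, X ^ q = GeneralLinearGroup.scalar (Fin 3) u := by
  obtain ⟨q, hq, hXq⟩ := isOfFinOrder_iff_pow_eq_one.mp hX
  rw [← QuotientGroup.mk_pow, QuotientGroup.eq_one_iff] at hXq
  obtain ⟨u, hu⟩ := hXq
  exact ⟨q, hq, u, hu.symm⟩

theorem IsComplexReflection.exists_lift_rank_sub_one_le_one {x : PGL3}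
    (hx : IsComplexReflection x) :
    ∃ R : GL3, QuotientGroup.mk R = x ∧ ((R : Matrix (Fin 3) (Fin 3) ℂ) - 1).rank ≤ 1 := by
  obtain ⟨N, rfl, -, -, μ, hμ⟩ := hx
  have hrank : ((N : Matrix (Fin 3) (Fin 3) ℂ) - μ • 1).rank = 1 := by
    have := rank_sub_smul_one_add_finrank_eigenspace (N : Matrix (Fin 3) (Fin 3) ℂ) μ
    rw [hμ, Fintype.card_fin] at this
    omega
  have hμ0 : μ ≠ 0 := by
    rintro rfl
    rw [zero_smul, sub_zero, rank_of_isUnit _ N.isUnit] at hrank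
    simp at hrank
  let S : GL3 := GeneralLinearGroup.scalar (Fin 3) (Units.mk0 μ⁻¹ (inv_ne_zero hμ0))
  have hS : (QuotientGroup.mk S : PGL3) = 1 := (QuotientGroup.eq_one_iff S).mpr ⟨_, rfl⟩
  have hSN : ((S * N : GL3) : Matrix (Fin 3) (Fin 3) ℂ) - 1 = S * (N - μ • 1) := by
    have hSval : (S : Matrix (Fin 3) (Fin 3) ℂ) = μ⁻¹ • 1 := by
      simp [S, smul_one_eq_diagonal]
    rw [Units.val_mul, mul_sub, hSval, smul_mul_smul_comm, inv_mul_cancel₀ hμ0, one_smul, mul_one]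
  refine ⟨S * N, by rw [QuotientGroup.mk_mul, hS, one_mul], ?_⟩
  rw [hSN]
  exact (rank_mul_le_right _ _).trans hrank.le

theorem IsRegularElliptic.exists_lift_hasEigenvalue {x : PGL3} (hx : IsRegularElliptic x) :
    ∃ M : GL3, QuotientGroup.mk M = x ∧ IsOfFinOrder M ∧
      ∃ d : Fin 3 → ℂ, Function.Injective d ∧
        ∀ i, Module.End.HasEigenvalue (M : Matrix (Fin 3) (Fin 3) ℂ).mulVecLin (d i) := by
  obtain ⟨M, hMx, hM, a, b, c, hab, hac, hbc, ha, hb, hc⟩ := hx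
  refine ⟨M, hMx, isOfFinOrder_iff_pow_eq_one.mpr hM, ![a, b, c], ?_, ?_⟩
  · intro i j
    fin_cases i <;> fin_cases j <;> simp [*, Ne.symm]
  · simp [Fin.forall_fin_succ, *]

variable {Γ : Type*} [Group Γ] {ρ : Γ →* PGL3} {J R : Γ}

theorem TypePreserving.exists_lift_rank_sub_one_le_one (hρ : TypePreserving ρ J R) :
    ∃ X : GL3, QuotientGroup.mk X = ρ R ∧ ((X : Matrix (Fin 3) (Fin 3) ℂ) - 1).rank ≤ 1 := by
  rcases hρ.1 with hR | hR
  · exact hR.exists_lift_rank_sub_one_le_one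
  · exact ⟨1, hR.symm, by simp⟩

theorem typeThree_reps_cyclotomic_general (hρ : TypePreserving ρ J R)
    (hR : IsOfFinOrder (ρ R)) (hRJ : IsOfFinOrder (ρ (R * J))) :
    ∃ (g : PGL3) (n : ℕ), 0 < n ∧
      ∃ MJ MR : GL3,
        (QuotientGroup.mk MJ : PGL3) = g * ρ J * g⁻¹ ∧
        (QuotientGroup.mk MR : PGL3) = g * ρ R * g⁻¹ ∧
        (∀ i j, (MJ : Matrix (Fin 3) (Fin 3) ℂ) i j ∈
          Algebra.adjoin ℚ {Complex.exp (2 * Real.pi * Complex.I / n)}) ∧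
        (∀ i j, (MR : Matrix (Fin 3) (Fin 3) ℂ) i j ∈
          Algebra.adjoin ℚ {Complex.exp (2 * Real.pi * Complex.I / n)}) := by
  obtain ⟨M, hMJ, hM, d, hd, hMd⟩ := hρ.2.exists_lift_hasEigenvalue
  obtain ⟨X, hXR, hX1⟩ := hρ.exists_lift_rank_sub_one_le_one
  have hX : IsOfFinOrder X := by
    obtain ⟨q, hq, u, hu⟩ := exists_pow_eq_scalar_of_isOfFinOrder_mk (hXR ▸ hR)
    exact isOfFinOrder_of_one_mem_spectrum_of_pow_eq_scalar hq
      (one_mem_spectrum_of_rank_sub_one_le_one hX1) hu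
  have hXM : IsOfFinOrder (X * M) := by
    rw [map_mul, ← hXR, ← hMJ, ← QuotientGroup.mk_mul] at hRJ
    obtain ⟨q, hq, u, hu⟩ := exists_pow_eq_scalar_of_isOfFinOrder_mk hRJ
    refine isOfFinOrder_of_det_of_pow_eq_scalar hq ?_ hu
    rw [map_mul]
    exact (MonoidHom.isOfFinOrder _ hX).mul (MonoidHom.isOfFinOrder _ hM)
  have hn : 0 < orderOf M * orderOf (X * M) := Nat.mul_pos hM.orderOf_pos hXM.orderOf_pos
  obtain ⟨Q, hQM, hQX⟩ := exists_conj_mem_of_hasEigenvalue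
    (fun _ => mem_cyclotomicSubfield_of_pow_eq_one hn.ne') hd hMd
    (orderOf_dvd_iff_pow_eq_one.mp (dvd_mul_right _ _)) hX1
    (orderOf_dvd_iff_pow_eq_one.mp (dvd_mul_left _ _))
  exact ⟨QuotientGroup.mk Q, _, hn, Q * M * Q⁻¹, Q * X * Q⁻¹, by simp [hMJ], by simp [hXR],
    fun i j => (mem_cyclotomicSubfield_iff hn.ne').mp (hQM i j),
    fun i j => (mem_cyclotomicSubfield_iff hn.ne').mp (hQX i j)⟩

end Lifts

section GammaThree

variable {p k d : ℕ}

theorem GammaThree.isOfFinOrder_of_R (hp : 0 < p) :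
    IsOfFinOrder (PresentedGroup.of Gen2.R : GammaThree p k d) :=
  isOfFinOrder_iff_pow_eq_one.mpr ⟨p, hp, PresentedGroup.one_of_mem (rels := relsThree p k d)
    (x := FreeGroup.of Gen2.R ^ p) (by simp [relsThree])⟩

theorem GammaThree.isOfFinOrder_of_R_mul_of_J (hk : 0 < k) :
    IsOfFinOrder (PresentedGroup.of Gen2.R * PresentedGroup.of Gen2.J : GammaThree p k d) :=
  isOfFinOrder_iff_pow_eq_one.mpr ⟨2 * k, by positivity,
    PresentedGroup.one_of_mem (rels := relsThree p k d)
      (x := (FreeGroup.of Gen2.R * FreeGroup.of Gen2.J) ^ (2 * k)) (by simp [relsThree])⟩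

end GammaThree

/-- Every type-preserving representation of the listed type three Deligne-Mostow groups into
`PGL(3,ℂ)` is conjugate to one whose generator images lift to matrices with entries in a
cyclotomic extension `ℚ(ζₙ)` of `ℚ` inside `ℂ`, where `ζₙ = exp(2πi/n)`. -/
theorem typeThree_reps_cyclotomic :
    ∀ p k d : ℕ, (p, k) ∈ ({(7,2), (8,2), (9,2), (10,2), (12,2), (18,2)} : Set (ℕ × ℕ)) → 0 < d →
    (1 : ℚ) / d = 1 / 2 - 3 / p →
    ∀ ρ : GammaThree p k d →* PGL3,
      TypePreserving ρ (PresentedGroup.of Gen2.J) (PresentedGroup.of Gen2.R) →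
      ∃ (g : PGL3) (n : ℕ), 0 < n ∧
        ∃ MJ MR : GL3,
          (QuotientGroup.mk MJ : PGL3) = g * ρ (PresentedGroup.of Gen2.J) * g⁻¹ ∧
          (QuotientGroup.mk MR : PGL3) = g * ρ (PresentedGroup.of Gen2.R) * g⁻¹ ∧
          (∀ i j, (MJ : Matrix (Fin 3) (Fin 3) ℂ) i j ∈
            Algebra.adjoin ℚ {Complex.exp (2 * Real.pi * Complex.I / n)}) ∧
          (∀ i j, (MR : Matrix (Fin 3) (Fin 3) ℂ) i j ∈
            Algebra.adjoin ℚ {Complex.exp (2 * Real.pi * Complex.I / n)}) := by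
  intro p k d hpk _ _ ρ hρ
  obtain ⟨hp, hk⟩ : 0 < p ∧ 0 < k := by
    simp only [Set.mem_insert_iff, Set.mem_singleton_iff, Prod.mk.injEq] at hpk
    omega
  exact typeThree_reps_cyclotomic_general hρ (ρ.isOfFinOrder (GammaThree.isOfFinOrder_of_R hp))
    (ρ.isOfFinOrder (GammaThree.isOfFinOrder_of_R_mul_of_J hk))
end
end
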